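/- arXiv:1901.07904 — 4 statements merged into one kernel-verified Lean document; each statement's English description precedes it below -/
import Mathlib

section
/- Let N : ℕ, let E : Fin N → Finset (Fin N) be an assignment of index sets, and let x : Fin N → ℝ be such that x i = 0 or x i = 1 for every i, and x i = ∏_{j ∈ E i} x j for every i. Then all four families of quadratic equalities hold: (1) (x i)^2 = x i for all i; (2) x i * x j = x i for all i, j with E j ⊆ E i; (3) x j * x k = x i for all i, j, k with E i = E j ∪ E k; (4) x i * x j = x k * x l for all i, j, k, l with E i ∪ E j = E k ∪ E l. -/
/-! Factors common to two products of idempotents may be merged, so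
`(∏ i ∈ s, f i) * ∏ i ∈ t, f i = ∏ i ∈ s ∪ t, f i`. Hence, when `y i` is the
product over `E i`, the value `y i * y j` depends only on `E i ∪ E j`, and each
family of equalities compares two such unions. -/

section CommMonoid

variable {ι κ M : Type*} [CommMonoid M]

theorem isIdempotentElem_finset_prod {s : Finset ι} {f : ι → M}
    (hf : ∀ i ∈ s, IsIdempotentElem (f i)) : IsIdempotentElem (∏ i ∈ s, f i) :=
  Finset.prod_induction f IsIdempotentElem (fun _ _ ↦ .mul) .one hf

variable [DecidableEq ι]

theorem prod_mul_prod_eq_prod_union_of_isIdempotentElem {s t : Finset ι} {f : ι → M}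
    (hf : ∀ i ∈ s ∩ t, IsIdempotentElem (f i)) :
    (∏ i ∈ s, f i) * ∏ i ∈ t, f i = ∏ i ∈ s ∪ t, f i := by
  have hidem : (∏ i ∈ s ∩ t, f i) * ∏ i ∈ s ∩ t, f i = ∏ i ∈ s ∩ t, f i :=
    isIdempotentElem_finset_prod hf
  have hsub : s ∩ t ⊆ s ∪ t := Finset.inter_subset_union
  calc (∏ i ∈ s, f i) * ∏ i ∈ t, f i
      = (∏ i ∈ s ∪ t, f i) * ∏ i ∈ s ∩ t, f i := Finset.prod_union_inter.symm
    _ = (∏ i ∈ (s ∪ t) \ (s ∩ t), f i) * ((∏ i ∈ s ∩ t, f i) * ∏ i ∈ s ∩ t, f i) := by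
        rw [← Finset.prod_sdiff hsub, mul_assoc]
    _ = ∏ i ∈ s ∪ t, f i := by rw [hidem, Finset.prod_sdiff hsub]

theorem pqcr_valid_quadratic_equalities_general {E : κ → Finset ι} {x : ι → M} {y : κ → M}
    (hx : ∀ i, IsIdempotentElem (x i)) (hy : ∀ i, y i = ∏ j ∈ E i, x j) :
    (∀ i, y i ^ 2 = y i) ∧
    (∀ i j, E j ⊆ E i → y i * y j = y i) ∧
    (∀ i j k, E i = E j ∪ E k → y j * y k = y i) ∧
    (∀ i j k l, E i ∪ E j = E k ∪ E l → y i * y j = y k * y l) := by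
  have hmul (i j : κ) : y i * y j = ∏ m ∈ E i ∪ E j, x m := by
    rw [hy i, hy j, prod_mul_prod_eq_prod_union_of_isIdempotentElem fun m _ ↦ hx m]
  have hmul_of_union (i j k : κ) (h : E i = E j ∪ E k) : y j * y k = y i := by
    rw [hmul, ← h, ← hy]
  have hmul_of_subset (i j : κ) (h : E j ⊆ E i) : y i * y j = y i :=
    hmul_of_union i i j (Finset.union_eq_left.mpr h).symm
  refine ⟨fun i ↦ ?_, hmul_of_subset, hmul_of_union, fun i j k l h ↦ ?_⟩
  · rw [sq, hmul_of_subset i i subset_rfl]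
  · rw [hmul, hmul, h]

end CommMonoid

theorem pqcr_valid_quadratic_equalities (N : ℕ) (E : Fin N → Finset (Fin N))
    (x : Fin N → ℝ) (hx : ∀ i, x i = 0 ∨ x i = 1)
    (hE : ∀ i, x i = ∏ j ∈ E i, x j) :
    (∀ i, (x i) ^ 2 = x i) ∧
    (∀ i j, E j ⊆ E i → x i * x j = x i) ∧
    (∀ i j k, E i = E j ∪ E k → x j * x k = x i) ∧
    (∀ i j k l, E i ∪ E j = E k ∪ E l → x i * x j = x k * x l) :=
  pqcr_valid_quadratic_equalities_general
    (fun i ↦ IsIdempotentElem.iff_eq_zero_or_one.mpr (hx i)) hE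
end

section
/- Let n : ℕ and let M : Matrix (Fin n) (Fin n) ℝ be positive semidefinite. Let i, j be indices and a, b : ℝ with M i i = a, M j j = b, and M i j = a. Then a ≤ b. -/
section

variable {ι R : Type*} [Ring R] [PartialOrder R] [StarRing R] {M : Matrix ι ι R}

theorem pair_quadratic_form_nonneg_of_posSemidef
    (hM : M.PosSemidef) (i j : ι) (x y : R) :
    0 ≤ star x * M i i * x + star x * M i j * y + (star y * M j i * x + star y * M j j * y) := by
  -- Indexing by `Fin 2` treats `i = j` and `i ≠ j` alike.
  simpa [Matrix.mulVec, dotProduct, Fin.sum_univ_two, mul_add, mul_assoc] using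
    (hM.submatrix ![i, j]).dotProduct_mulVec_nonneg ![x, y]

variable [AddLeftMono R]

theorem apply_add_apply_le_diag_add_diag_of_posSemidef
    (hM : M.PosSemidef) (i j : ι) : M i j + M j i ≤ M i i + M j j := by
  have form_nonneg := pair_quadratic_form_nonneg_of_posSemidef hM i j 1 (-1)
  have form_eq : star 1 * M i i * 1 + star 1 * M i j * (-1) +
      (star (-1) * M j i * 1 + star (-1) * M j j * (-1)) =
      M i i + M j j - (M i j + M j i) := by
    simp only [star_neg, star_one, one_mul, mul_one, neg_mul, mul_neg, neg_neg]
    abel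
  exact sub_nonneg.mp (form_eq ▸ form_nonneg)

theorem psd_diag_le_of_entry_general
    (hM : M.PosSemidef) {i j : ι} (hij : M i j = M i i) : M i i ≤ M j j := by
  have hji : M j i = M i i := by
    rw [← hM.isHermitian.apply j i, hij, hM.isHermitian.apply i i]
  have double_le : M i i + M i i ≤ M i i + M j j := by
    simpa only [hij, hji] using apply_add_apply_le_diag_add_diag_of_posSemidef hM i j
  exact le_of_add_le_add_left double_le

end

theorem psd_diag_le_of_entry (n : ℕ) (M : Matrix (Fin n) (Fin n) ℝ)
    (hM : M.PosSemidef) (i j : Fin n) (a b : ℝ)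
    (hii : M i i = a) (hjj : M j j = b) (hij : M i j = a) :
    a ≤ b := by
  subst hii hjj
  exact psd_diag_le_of_entry_general hM hij
end

section
/- Let N : ℕ and let M : Matrix (Fin (N+1)) (Fin (N+1)) ℝ be a symmetric positive semidefinite matrix with M 0 0 = 1. Let i, j, k : Fin (N+1) be distinct indices, all different from 0, and let a, b, c : ℝ. Suppose M 0 i = a, M 0 j = b, M 0 k = c, M i i = a, M j j = b, M k k = c, M i j = a, M i k = a, and M j k = a. Then b + c − 1 ≤ a. -/
/-!
For `z = e₀ + eᵢ - eⱼ - eₖ`, the rows of `M` at `i`, `j` and `k` annihilate `z`, while the row at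
`0` sends it to `1 + a - b - c`. Since `z` has entry `1` at `0`, the quadratic form takes the value
`1 + a - b - c` at `z`.
-/

open Matrix

/-- The moment matrix of `1, xᵢ, xⱼ, xₖ` (in this order) for idempotent variables with
`xᵢ = xⱼ * xₖ`, written in terms of the first moments `a`, `b`, `c` of `xᵢ`, `xⱼ`, `xₖ`. It is the
principal submatrix prescribed by constraints (6)–(8) when `Eᵢ = Eⱼ ∪ Eₖ`; here `a`, `b`, `c` are
arbitrary scalars. -/
def fortetMatrix {R : Type*} [One R] (a b c : R) : Matrix (Fin 4) (Fin 4) R :=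
  !![1, a, b, c;
     a, a, a, a;
     b, a, b, a;
     c, a, a, c]

theorem fortetMatrix_mulVec {R : Type*} [NonAssocRing R] (a b c : R) :
    fortetMatrix a b c *ᵥ ![1, 1, -1, -1] = ![1 + a - b - c, 0, 0, 0] := by
  ext p
  fin_cases p <;> simp [fortetMatrix, mulVec, dotProduct, Fin.sum_univ_four, sub_eq_add_neg]

theorem add_sub_one_le_of_posSemidef_fortetMatrix {R : Type*} [Ring R] [PartialOrder R]
    [IsOrderedAddMonoid R] [StarRing R] {a b c : R} (h : (fortetMatrix a b c).PosSemidef) :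
    b + c - 1 ≤ a := by
  have quadForm_nonneg := h.dotProduct_mulVec_nonneg ![1, 1, -1, -1]
  have quadForm_eq :
      star ![1, 1, -1, -1] ⬝ᵥ (fortetMatrix a b c *ᵥ ![1, 1, -1, -1]) = 1 + a - b - c := by
    simp [fortetMatrix_mulVec, dotProduct, Fin.sum_univ_four]
  rw [quadForm_eq, sub_sub, sub_nonneg] at quadForm_nonneg
  exact sub_le_iff_le_add'.mpr quadForm_nonneg

-- Each of `a`, `b`, `c` is a diagonal entry, hence self-adjoint, so the entries below the
-- diagonal agree with those above it.
theorem submatrix_eq_fortetMatrix {n R : Type*} [One R] [Star R] {M : Matrix n n R}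
    (hM : M.IsHermitian) {o i j k : n} {a b c : R} (hoo : M o o = 1)
    (hoi : M o i = a) (hoj : M o j = b) (hok : M o k = c)
    (hii : M i i = a) (hjj : M j j = b) (hkk : M k k = c)
    (hij : M i j = a) (hik : M i k = a) (hjk : M j k = a) :
    M.submatrix ![o, i, j, k] ![o, i, j, k] = fortetMatrix a b c := by
  have star_a : star a = a := hii ▸ hM.apply i i
  have star_b : star b = b := hjj ▸ hM.apply j j
  have star_c : star c = c := hkk ▸ hM.apply k k
  have hio : M i o = a := by rw [← hM.apply, hoi, star_a]
  have hjo : M j o = b := by rw [← hM.apply, hoj, star_b]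
  have hko : M k o = c := by rw [← hM.apply, hok, star_c]
  have hji : M j i = a := by rw [← hM.apply, hij, star_a]
  have hki : M k i = a := by rw [← hM.apply, hik, star_a]
  have hkj : M k j = a := by rw [← hM.apply, hjk, star_a]
  ext p q
  fin_cases p <;> fin_cases q <;> simpa [fortetMatrix]

theorem moment_matrix_fortet_d_general {n R : Type*} [Ring R] [PartialOrder R]
    [IsOrderedAddMonoid R] [StarRing R] {M : Matrix n n R} (hM : M.PosSemidef)
    {o i j k : n} {a b c : R} (hoo : M o o = 1)
    (hoi : M o i = a) (hoj : M o j = b) (hok : M o k = c)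
    (hii : M i i = a) (hjj : M j j = b) (hkk : M k k = c)
    (hij : M i j = a) (hik : M i k = a) (hjk : M j k = a) :
    b + c - 1 ≤ a := by
  have hsub := hM.submatrix ![o, i, j, k]
  rw [submatrix_eq_fortetMatrix hM.isHermitian hoo hoi hoj hok hii hjj hkk hij hik hjk] at hsub
  exact add_sub_one_le_of_posSemidef_fortetMatrix hsub

theorem moment_matrix_fortet_d (N : ℕ)
    (M : Matrix (Fin (N + 1)) (Fin (N + 1)) ℝ) (hsymm : M.IsSymm)
    (hM : M.PosSemidef) (h00 : M 0 0 = 1)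
    (i j k : Fin (N + 1)) (hij : i ≠ j) (hik : i ≠ k) (hjk : j ≠ k)
    (hi : i ≠ 0) (hj : j ≠ 0) (hk : k ≠ 0) (a b c : ℝ)
    (h0i : M 0 i = a) (h0j : M 0 j = b) (h0k : M 0 k = c)
    (hii : M i i = a) (hjj : M j j = b) (hkk : M k k = c)
    (hMij : M i j = a) (hMik : M i k = a) (hMjk : M j k = a) :
    b + c - 1 ≤ a :=
  moment_matrix_fortet_d_general hM h00 h0i h0j h0k hii hjj hkk hMij hMik hMjk
end

section
/- Let N : ℕ and let M : Matrix (Fin (N+1)) (Fin (N+1)) ℝ be a symmetric positive semidefinite matrix with M 0 0 = 1. Let i, j, k : Fin (N+1) be distinct indices, all different from 0, and let a, b, c : ℝ. Suppose M 0 i = a, M 0 j = b, M 0 k = c, M i i = a, M j j = b, M k k = c, M i j = a, M i k = a, and M j k = a. Then all four Fortet inequalities hold: 0 ≤ a, a ≤ b, a ≤ c, and b + c − 1 ≤ a. -/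
/-!
A positive semidefinite matrix behaves like a Gram matrix, with one vector `e_p` for each index.
The square of `e_i - e_j` gives `M i i ≤ M j j`, and the square of `e_o + e_i - e_j - e_k`, where
`o` is the index of the border, gives `M j j + M k k ≤ M o o + M i i`. The latter vector is the
analogue of `(1 - x_j) * (1 - x_k)` when `x_i = x_j * x_k`.
-/

theorem isHermitian_apply_swap_eq_diag {ι α : Type*} [Star α] {M : Matrix ι ι α}
    (hM : M.IsHermitian) {p q r : ι} (h : M p q = M r r) : M q p = M r r := by
  rw [← hM.apply q p, h, hM.apply]

section PosSemidef

variable {ι R : Type*} [Ring R] [PartialOrder R] [StarRing R] {M : Matrix ι ι R}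

theorem posSemidef_sum_sum_zsmul_nonneg {m : Type*} [Fintype m] (hM : M.PosSemidef)
    (e : m → ι) (w : m → ℤ) : 0 ≤ ∑ p, ∑ q, (w p * w q) • M (e p) (e q) := by
  have quadratic_form_nonneg :=
    (hM.submatrix e).dotProduct_mulVec_nonneg fun p => (w p : R)
  convert quadratic_form_nonneg using 1
  simp only [dotProduct, Matrix.mulVec, Matrix.submatrix_apply, Pi.star_apply, star_intCast,
    Finset.mul_sum, zsmul_eq_mul, Int.cast_mul, mul_assoc,
    fun p q => Int.cast_comm (w q) (M (e p) (e q))]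

variable [IsOrderedAddMonoid R]

theorem posSemidef_apply_add_apply_swap_le (hM : M.PosSemidef) (p q : ι) :
    M p q + M q p ≤ M p p + M q q := by
  have square_nonneg := posSemidef_sum_sum_zsmul_nonneg hM ![p, q] ![1, -1]
  rw [← sub_nonneg]
  convert square_nonneg using 1
  simp only [Fin.sum_univ_two, Matrix.cons_val_zero, Matrix.cons_val_one, mul_one, mul_neg,
    neg_neg, neg_smul, one_smul]
  abel

theorem posSemidef_diag_le_diag (hM : M.PosSemidef) {p q : ι} (hpq : M p q = M p p) :
    M p p ≤ M q q := by
  have hqp : M q p = M p p := isHermitian_apply_swap_eq_diag hM.isHermitian hpq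
  simpa only [hpq, hqp, add_le_add_iff_left] using posSemidef_apply_add_apply_swap_le hM p q

theorem posSemidef_diag_add_diag_le (hM : M.PosSemidef) {o i j k : ι}
    (hoi : M o i = M i i) (hoj : M o j = M j j) (hok : M o k = M k k)
    (hij : M i j = M i i) (hik : M i k = M i i) (hjk : M j k = M i i) :
    M j j + M k k ≤ M o o + M i i := by
  have square_nonneg := posSemidef_sum_sum_zsmul_nonneg hM ![o, i, j, k] ![1, 1, -1, -1]
  have swap {p q r : ι} : M p q = M r r → M q p = M r r :=
    isHermitian_apply_swap_eq_diag hM.isHermitian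
  rw [← sub_nonneg]
  convert square_nonneg using 1
  simp only [Fin.sum_univ_four, Matrix.cons_val, mul_one, mul_neg, neg_neg, neg_smul, one_smul,
    hoi, hoj, hok, hij, hik, hjk, swap hoi, swap hoj, swap hok, swap hij, swap hik, swap hjk]
  abel

theorem moment_matrix_fortet_all_general (hM : M.PosSemidef) {o i j k : ι}
    (hoi : M o i = M i i) (hoj : M o j = M j j) (hok : M o k = M k k)
    (hij : M i j = M i i) (hik : M i k = M i i) (hjk : M j k = M i i) :
    0 ≤ M i i ∧ M i i ≤ M j j ∧ M i i ≤ M k k ∧ M j j + M k k - M o o ≤ M i i :=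
  ⟨hM.diag_nonneg, posSemidef_diag_le_diag hM hij, posSemidef_diag_le_diag hM hik,
    sub_le_iff_le_add'.2 (posSemidef_diag_add_diag_le hM hoi hoj hok hij hik hjk)⟩

end PosSemidef

theorem moment_matrix_fortet_all (N : ℕ)
    (M : Matrix (Fin (N + 1)) (Fin (N + 1)) ℝ) (hsymm : M.IsSymm)
    (hM : M.PosSemidef) (h00 : M 0 0 = 1)
    (i j k : Fin (N + 1)) (hij : i ≠ j) (hik : i ≠ k) (hjk : j ≠ k)
    (hi : i ≠ 0) (hj : j ≠ 0) (hk : k ≠ 0) (a b c : ℝ)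
    (h0i : M 0 i = a) (h0j : M 0 j = b) (h0k : M 0 k = c)
    (hii : M i i = a) (hjj : M j j = b) (hkk : M k k = c)
    (hMij : M i j = a) (hMik : M i k = a) (hMjk : M j k = a) :
    0 ≤ a ∧ a ≤ b ∧ a ≤ c ∧ b + c - 1 ≤ a := by
  subst hii hjj hkk
  exact h00 ▸ moment_matrix_fortet_all_general hM h0i h0j h0k hMij hMik hMjk
end
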